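/- Let λ > 0 be real, m ≥ 1 an integer, and Φ_m(t) = Σ_{l=0}^{m} ((l+λ)/λ) C_l^λ(t). Then the momentum variance of Φ_m, defined as var_M(Φ_m) = −∫_{−1}^{1} ((1−t²) Φ_m''(t) − (2λ+1) t Φ_m'(t)) Φ_m(t) (1−t²)^{λ−1/2} dt / ∫_{−1}^{1} Φ_m(t)² (1−t²)^{λ−1/2} dt, satisfies var_M(Φ_m) = m·(m+2λ+1)·(2λ+1)/(2λ+3). -/

import Mathlib

open Real Finset

/-- The Gegenbauer polynomials `C_l^λ`, defined by `C_0^λ(t) = 1`, `C_1^λ(t) = 2λt` and the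
recurrence `(l+1) C_{l+1}^λ(t) = 2(l+λ) t C_l^λ(t) − (l+2λ−1) C_{l−1}^λ(t)` for `l ≥ 1`. -/
noncomputable def gegenbauer (lam : ℝ) : ℕ → ℝ → ℝ
  | 0 => fun _ => 1
  | 1 => fun t => 2 * lam * t
  | (l + 2) => fun t =>
      (2 * ((l : ℝ) + 1 + lam) * t * gegenbauer lam (l + 1) t
        - ((l : ℝ) + 2 * lam) * gegenbauer lam l t) / ((l : ℝ) + 2)

/-- `Φ_m = Σ_{l=0}^m ((l+λ)/λ) C_l^λ`, the (unnormalized) weighted scaling function. -/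
noncomputable def PhiScaling (lam : ℝ) (m : ℕ) : ℝ → ℝ :=
  fun t => ∑ l ∈ Finset.range (m + 1), (((l : ℝ) + lam) / lam) * gegenbauer lam l t

open Polynomial in
noncomputable def gegP (lam : ℝ) : ℕ → Polynomial ℝ
  | 0 => 1
  | 1 => C (2 * lam) * X
  | (l + 2) => C (((l : ℝ) + 2)⁻¹) * (C (2 * ((l : ℝ) + 1 + lam)) * X * gegP lam (l + 1)
        - C ((l : ℝ) + 2 * lam) * gegP lam l)

lemma gegP_eval (lam t : ℝ) (l : ℕ) : (gegP lam l).eval t = gegenbauer lam l t := by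
  induction l using Nat.twoStepInduction with
  | zero => simp [gegP, gegenbauer]
  | one => simp [gegP, gegenbauer]
  | more l h1 h2 =>
    simp only [gegP, gegenbauer, Polynomial.eval_mul, Polynomial.eval_sub, Polynomial.eval_C,
      Polynomial.eval_X, h1, h2]
    rw [div_eq_inv_mul]

open Polynomial in
lemma gegP_rec (lam : ℝ) (l : ℕ) : C ((l : ℝ) + 2) * gegP lam (l + 2) =
    C (2 * ((l : ℝ) + 1 + lam)) * X * gegP lam (l + 1) - C ((l : ℝ) + 2 * lam) * gegP lam l := by
  have h : (l : ℝ) + 2 ≠ 0 := by positivity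
  rw [gegP, ← mul_assoc, ← C_mul, mul_inv_cancel₀ h, C_1, one_mul]

open Polynomial in
lemma gegP_CD (lam : ℝ) (l : ℕ) :
    derivative (gegP lam (l + 1)) = X * derivative (gegP lam l) + C ((l : ℝ) + 2 * lam) * gegP lam l ∧
    X * derivative (gegP lam (l + 1)) - derivative (gegP lam l) = C ((l : ℝ) + 1) * gegP lam (l + 1) := by
  induction l with
  | zero =>
    simp [gegP]; ring
  | succ l ih =>
    obtain ⟨h1, h2⟩ := ih
    have hr := gegP_rec lam l
    have hd := congrArg derivative hr
    simp only [derivative_mul, derivative_sub, derivative_C, derivative_X, zero_mul, zero_add,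
      mul_one] at hd
    have h : (C ((l : ℝ) + 2) : ℝ[X]) ≠ 0 := by
      rw [Ne, C_eq_zero]; positivity
    simp only [C_add, C_mul, C_1, C_ofNat, Nat.cast_add, Nat.cast_one] at *
    have e1 : derivative (gegP lam (l + 1 + 1)) = X * derivative (gegP lam (l + 1)) +
        (C (l : ℝ) + 1 + 2 * C lam) * gegP lam (l + 1) := by
      apply mul_left_cancel₀ h
      linear_combination hd + (C (l : ℝ) + 2 * C lam) * h2
    refine ⟨e1, ?_⟩
    rw [e1]
    linear_combination X * h2 - h1 - hr

open Polynomial in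
lemma gegP_ode (lam : ℝ) (l : ℕ) :
    (1 - X ^ 2) * derivative (derivative (gegP lam l)) - C (2 * lam + 1) * X * derivative (gegP lam l)
      = - C ((l : ℝ) * (l + 2 * lam)) * gegP lam l := by
  obtain ⟨h1, h2⟩ := gegP_CD lam l
  have hB : (1 - X ^ 2) * derivative (gegP lam l) =
      C ((l : ℝ) + 2 * lam) * X * gegP lam l - C ((l : ℝ) + 1) * gegP lam (l + 1) := by
    linear_combination X * h1 - h2
  have hd := congrArg derivative hB
  simp only [derivative_mul, derivative_sub, derivative_C, derivative_X, zero_mul, zero_add,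
      mul_one, derivative_one, derivative_X_pow] at hd
  simp only [C_add, C_mul, C_1, C_ofNat, Nat.cast_ofNat] at *
  linear_combination hd - (C (l : ℝ) + 1) * h1

lemma w_int (s : ℝ) (hs : -1 < s) :
    IntervalIntegrable (fun t : ℝ => (1 - t ^ 2) ^ s) MeasureTheory.volume (-1) 1 := by
  have h1 : IntervalIntegrable (fun t : ℝ => (1 - t ^ 2) ^ s) MeasureTheory.volume 0 1 := by
    have h := (intervalIntegral.intervalIntegrable_rpow' (a := 1) (b := 0) hs).comp_sub_left 1
    simp only [sub_self, sub_zero] at h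
    have hc : ContinuousOn (fun t : ℝ => (1 + t) ^ s) (Set.uIcc 0 1) := by
      intro t ht
      rw [Set.uIcc_of_le zero_le_one] at ht
      apply ContinuousAt.continuousWithinAt
      exact ContinuousAt.rpow_const (by fun_prop) (Or.inl (by linarith [ht.1]))
    refine (h.mul_continuousOn hc).congr ?_
    intro t ht
    rw [Set.uIoc_of_le zero_le_one] at ht
    simp only
    rw [← Real.mul_rpow (by linarith [ht.2]) (by linarith [ht.1])]
    congr 1; ring
  have h2 := h1.comp_sub_left 0
  simp only [sub_zero, zero_sub, neg_sq] at h2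
  exact h2.symm.trans h1

noncomputable def JJ (lam : ℝ) : Polynomial ℝ → ℝ := fun p =>
  ∫ t in (-1 : ℝ)..1, p.eval t * (1 - t ^ 2) ^ (lam - 1 / 2)

lemma JJ_int (lam : ℝ) (hlam : 0 < lam) (p : Polynomial ℝ) :
    IntervalIntegrable (fun t : ℝ => p.eval t * (1 - t ^ 2) ^ (lam - 1 / 2))
      MeasureTheory.volume (-1) 1 :=
  (w_int _ (by linarith)).continuousOn_mul p.continuous.continuousOn

lemma JJ_add (lam : ℝ) (hlam : 0 < lam) (p q : Polynomial ℝ) :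
    JJ lam (p + q) = JJ lam p + JJ lam q := by
  unfold JJ
  rw [← intervalIntegral.integral_add (JJ_int lam hlam p) (JJ_int lam hlam q)]
  simp only [Polynomial.eval_add, add_mul]

lemma JJ_smul (lam : ℝ) (c : ℝ) (p : Polynomial ℝ) :
    JJ lam (Polynomial.C c * p) = c * JJ lam p := by
  unfold JJ
  rw [← intervalIntegral.integral_const_mul]
  simp only [Polynomial.eval_mul, Polynomial.eval_C, mul_assoc]

lemma JJ_sub (lam : ℝ) (hlam : 0 < lam) (p q : Polynomial ℝ) :
    JJ lam (p - q) = JJ lam p - JJ lam q := by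
  have h := JJ_add lam hlam (p - q) q
  rw [sub_add_cancel] at h
  linarith

open Polynomial in
lemma JJ_zero (lam : ℝ) (hlam : 0 < lam) (p : Polynomial ℝ) :
    JJ lam ((1 - X ^ 2) * derivative p - C (2 * lam + 1) * X * p) = 0 := by
  have h := intervalIntegral.integral_eq_sub_of_hasDerivAt_of_le (a := -1) (b := 1)
    (f := fun t : ℝ => (1 - t ^ 2) ^ (lam + 1 / 2) * p.eval t)
    (f' := fun t : ℝ => ((1 - X ^ 2) * derivative p - C (2 * lam + 1) * X * p).eval t
      * (1 - t ^ 2) ^ (lam - 1 / 2)) (by norm_num) ?_ ?_ (JJ_int lam hlam _)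
  · unfold JJ
    rw [h]
    have : lam + 1 / 2 ≠ 0 := by positivity
    simp only [one_pow, neg_sq, one_pow, sub_self, Real.zero_rpow this]
    simp
  · apply ContinuousOn.mul _ p.continuous.continuousOn
    apply Continuous.continuousOn
    exact Continuous.rpow_const (by fun_prop) (fun _ => Or.inr (by positivity))
  · intro t ht
    have hpos : 0 < 1 - t ^ 2 := by nlinarith [ht.1, ht.2]
    have hb : HasDerivAt (fun t : ℝ => 1 - t ^ 2) (-(2 * t)) t := by
      simpa using ((hasDerivAt_id t).pow 2).const_sub 1
    have h1 := (hb.rpow_const (p := lam + 1 / 2) (Or.inl hpos.ne')).mul (p.hasDerivAt t)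
    refine h1.congr_deriv ?_
    have e1 : lam + 1 / 2 - 1 = lam - 1 / 2 := by ring
    have e2 : (1 - t ^ 2) ^ (lam + 1 / 2) = (1 - t ^ 2) ^ (lam - 1 / 2) * (1 - t ^ 2) := by
      rw [← Real.rpow_add_one hpos.ne']; congr 1; ring
    simp only [e1, e2, eval_sub, eval_mul, eval_one, eval_pow, eval_X, eval_C]
    ring

open Polynomial in
lemma gegP_orth (lam : ℝ) (hlam : 0 < lam) (k l : ℕ) (hkl : k < l) :
    JJ lam (gegP lam k * gegP lam l) = 0 := by
  have h := JJ_zero lam hlam (derivative (gegP lam k) * gegP lam l - gegP lam k * derivative (gegP lam l))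
  have e : (1 - X ^ 2) * derivative (derivative (gegP lam k) * gegP lam l - gegP lam k * derivative (gegP lam l))
      - C (2 * lam + 1) * X * (derivative (gegP lam k) * gegP lam l - gegP lam k * derivative (gegP lam l))
      = C ((l : ℝ) * (l + 2 * lam) - (k : ℝ) * (k + 2 * lam)) * (gegP lam k * gegP lam l) := by
    have h1 := gegP_ode lam k
    have h2 := gegP_ode lam l
    simp only [derivative_sub, derivative_mul, C_sub]
    linear_combination gegP lam l * h1 - gegP lam k * h2
  rw [e, JJ_smul] at h
  rcases mul_eq_zero.1 h with h | h
  · exfalso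
    have : (k : ℝ) < l := by exact_mod_cast hkl
    have : (0 : ℝ) ≤ k := by positivity
    nlinarith
  · exact h

noncomputable def hh (lam : ℝ) (l : ℕ) : ℝ := JJ lam (gegP lam l * gegP lam l)

open Polynomial in
lemma hh_rec (lam : ℝ) (hlam : 0 < lam) (l : ℕ) :
    hh lam (l + 1) * ((l + 1) * (l + 1 + lam)) = (l + lam) * (l + 2 * lam) * hh lam l := by
  have h1 : ((l : ℝ) + 1) * hh lam (l + 1) = 2 * (l + lam) * JJ lam (X * gegP lam l * gegP lam (l + 1)) := by
    cases l with
    | zero =>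
      unfold hh
      rw [← JJ_smul, ← JJ_smul]
      congr 1
      simp [gegP]; ring
    | succ l =>
      have hr := gegP_rec lam l
      have h0 := gegP_orth lam hlam l (l + 2) (by omega)
      have e : C ((l : ℝ) + 2) * (gegP lam (l + 2) * gegP lam (l + 2)) =
        C (2 * ((l : ℝ) + 1 + lam)) * (X * gegP lam (l + 1) * gegP lam (l + 2))
         - C ((l : ℝ) + 2 * lam) * (gegP lam l * gegP lam (l + 2)) := by
        linear_combination gegP lam (l + 2) * hr
      have e' := congrArg (JJ lam) e
      rw [JJ_sub lam hlam, JJ_smul, JJ_smul, JJ_smul, h0] at e'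
      unfold hh
      push_cast
      linear_combination e'
  have h2 : 2 * ((l : ℝ) + 1 + lam) * JJ lam (X * gegP lam l * gegP lam (l + 1)) = (l + 2 * lam) * hh lam l := by
    have hr := gegP_rec lam l
    have h0 := gegP_orth lam hlam l (l + 2) (by omega)
    have e : C ((l : ℝ) + 2) * (gegP lam l * gegP lam (l + 2)) =
        C (2 * ((l : ℝ) + 1 + lam)) * (X * gegP lam l * gegP lam (l + 1))
         - C ((l : ℝ) + 2 * lam) * (gegP lam l * gegP lam l) := by
      linear_combination gegP lam l * hr
    have e' := congrArg (JJ lam) e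
    rw [JJ_sub lam hlam, JJ_smul, JJ_smul, JJ_smul, h0] at e'
    unfold hh
    linear_combination -e'
  linear_combination (l + 1 + lam) * h1 + (l + lam) * h2

lemma hh_pos (lam : ℝ) (hlam : 0 < lam) (l : ℕ) : 0 < hh lam l := by
  induction l with
  | zero =>
    unfold hh JJ
    apply intervalIntegral.intervalIntegral_pos_of_pos_on (JJ_int lam hlam _) _ (by norm_num)
    intro t ht
    have hpos : 0 < 1 - t ^ 2 := by nlinarith [ht.1, ht.2]
    simp only [gegP, mul_one, Polynomial.eval_one, one_mul]
    positivity
  | succ l ih =>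
    have h := hh_rec lam hlam l
    have h1 : 0 < (l + lam) * (l + 2 * lam) * hh lam l := by positivity
    rw [← h] at h1
    exact pos_of_mul_pos_left h1 (by positivity)

open Polynomial in
noncomputable def PhiP (lam : ℝ) : ℕ → Polynomial ℝ
  | 0 => gegP lam 0
  | (m + 1) => PhiP lam m + C (((m + 1 : ℝ) + lam) / lam) * gegP lam (m + 1)

open Polynomial in
noncomputable def PsiP (lam : ℝ) : ℕ → Polynomial ℝ
  | 0 => 0
  | (m + 1) => PsiP lam m +
      C (((m + 1 : ℝ) * (m + 1 + 2 * lam)) * (((m + 1 : ℝ) + lam) / lam)) * gegP lam (m + 1)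

lemma PhiP_eval (lam : ℝ) (hlam : 0 < lam) (m : ℕ) :
    PhiScaling lam m = fun t => (PhiP lam m).eval t := by
  funext t
  induction m with
  | zero => simp [PhiScaling, PhiP, gegP, gegenbauer, hlam.ne']
  | succ m ih =>
    unfold PhiScaling at *
    rw [Finset.sum_range_succ, ih]
    simp [PhiP, gegP_eval]

open Polynomial in
lemma PhiP_L (lam : ℝ) (m : ℕ) :
    (1 - X ^ 2) * derivative (derivative (PhiP lam m)) - C (2 * lam + 1) * X * derivative (PhiP lam m)
      = - PsiP lam m := by
  induction m with
  | zero => simp [PhiP, PsiP, gegP]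
  | succ m ih =>
    have h := gegP_ode lam (m + 1)
    simp only [PhiP, PsiP, derivative_add, derivative_mul, derivative_C, zero_mul, zero_add]
    rw [C_mul (a := (m + 1 : ℝ) * (m + 1 + 2 * lam))]
    push_cast at h
    linear_combination ih + C (((m + 1 : ℝ) + lam) / lam) * h

lemma PhiP_orth (lam : ℝ) (hlam : 0 < lam) (m k : ℕ) (h : m < k) :
    JJ lam (PhiP lam m * gegP lam k) = 0 := by
  induction m with
  | zero => exact gegP_orth lam hlam 0 k h
  | succ m ih =>
    rw [PhiP, add_mul, JJ_add lam hlam, ih (by omega), mul_assoc, JJ_smul,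
      gegP_orth lam hlam _ k h]
    ring

lemma PsiP_orth (lam : ℝ) (hlam : 0 < lam) (m k : ℕ) (h : m < k) :
    JJ lam (PsiP lam m * gegP lam k) = 0 := by
  induction m with
  | zero => simp [PsiP, JJ]
  | succ m ih =>
    rw [PsiP, add_mul, JJ_add lam hlam, ih (by omega), mul_assoc, JJ_smul,
      gegP_orth lam hlam _ k h]
    ring

open Polynomial in
lemma D_succ (lam : ℝ) (hlam : 0 < lam) (m : ℕ) :
    JJ lam (PhiP lam (m + 1) * PhiP lam (m + 1)) = JJ lam (PhiP lam m * PhiP lam m)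
      + (((m + 1 : ℝ) + lam) / lam) ^ 2 * hh lam (m + 1) := by
  have e : PhiP lam (m + 1) * PhiP lam (m + 1) = PhiP lam m * PhiP lam m
      + C (2 * (((m + 1 : ℝ) + lam) / lam)) * (PhiP lam m * gegP lam (m + 1))
      + C ((((m + 1 : ℝ) + lam) / lam) ^ 2) * (gegP lam (m + 1) * gegP lam (m + 1)) := by
    simp only [PhiP, C_mul, C_pow, C_ofNat]; ring
  rw [e, JJ_add lam hlam, JJ_add lam hlam, JJ_smul, JJ_smul, PhiP_orth lam hlam _ _ (by omega), hh]
  ring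

open Polynomial in
lemma N_succ (lam : ℝ) (hlam : 0 < lam) (m : ℕ) :
    JJ lam (PsiP lam (m + 1) * PhiP lam (m + 1)) = JJ lam (PsiP lam m * PhiP lam m)
      + (m + 1 : ℝ) * (m + 1 + 2 * lam) * (((m + 1 : ℝ) + lam) / lam) ^ 2 * hh lam (m + 1) := by
  have e : PsiP lam (m + 1) * PhiP lam (m + 1) = PsiP lam m * PhiP lam m
      + C (((m + 1 : ℝ) + lam) / lam) * (PsiP lam m * gegP lam (m + 1))
      + C (((m + 1 : ℝ) * (m + 1 + 2 * lam)) * (((m + 1 : ℝ) + lam) / lam))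
          * (PhiP lam m * gegP lam (m + 1))
      + C (((m + 1 : ℝ) * (m + 1 + 2 * lam)) * (((m + 1 : ℝ) + lam) / lam) ^ 2)
          * (gegP lam (m + 1) * gegP lam (m + 1)) := by
    simp only [PhiP, PsiP, C_mul, C_pow]; ring
  rw [e, JJ_add lam hlam, JJ_add lam hlam, JJ_add lam hlam, JJ_smul, JJ_smul, JJ_smul,
    PhiP_orth lam hlam _ _ (by omega), PsiP_orth lam hlam _ _ (by omega), hh]
  ring

lemma D_val (lam : ℝ) (hlam : 0 < lam) (m : ℕ) :
    JJ lam (PhiP lam m * PhiP lam m) =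
      (m + lam) * (2 * m + 2 * lam + 1) * (m + 2 * lam) / (2 * (2 * lam + 1) * lam ^ 2) * hh lam m := by
  induction m with
  | zero =>
    rw [PhiP, ← hh]
    push_cast
    field_simp
    ring
  | succ m ih =>
    rw [D_succ lam hlam, ih]
    have h := hh_rec lam hlam m
    have hx : (m + lam) * (m + 2 * lam) * hh lam m = hh lam (m + 1) * ((m + 1) * (m + 1 + lam)) := h.symm
    have e : (m + lam) * (2 * m + 2 * lam + 1) * (m + 2 * lam) / (2 * (2 * lam + 1) * lam ^ 2) * hh lam m
      = (2 * m + 2 * lam + 1) / (2 * (2 * lam + 1) * lam ^ 2) * (hh lam (m + 1) * ((m + 1) * (m + 1 + lam))) := by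
      rw [← hx]; ring
    rw [e]
    push_cast
    field_simp
    ring

lemma N_val (lam : ℝ) (hlam : 0 < lam) (m : ℕ) :
    JJ lam (PsiP lam m * PhiP lam m) =
      (m : ℝ) * ((m : ℝ) + 2 * lam + 1) * (2 * lam + 1) / (2 * lam + 3) *
        JJ lam (PhiP lam m * PhiP lam m) := by
  induction m with
  | zero => simp [PsiP, JJ]
  | succ m ih =>
    rw [N_succ lam hlam, ih, D_val lam hlam, D_val lam hlam]
    have hx : (m + lam) * (m + 2 * lam) * hh lam m = hh lam (m + 1) * ((m + 1) * (m + 1 + lam)) :=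
      (hh_rec lam hlam m).symm
    have e : (m + lam) * (2 * m + 2 * lam + 1) * (m + 2 * lam) / (2 * (2 * lam + 1) * lam ^ 2) * hh lam m
      = (2 * m + 2 * lam + 1) / (2 * (2 * lam + 1) * lam ^ 2) * (hh lam (m + 1) * ((m + 1) * (m + 1 + lam))) := by
      rw [← hx]; ring
    rw [e]
    push_cast
    field_simp
    ring



/-- The momentum variance of the weighted scaling function `Φ_m` equals
`m(m+2λ+1)(2λ+1)/(2λ+3)`; here `f ↦ (1−t²)f'' − (2λ+1)t f'` is the Laplace–Beltrami
operator of the sphere acting on zonal functions. -/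
theorem momentum_variance_PhiScaling (lam : ℝ) (hlam : 0 < lam) (m : ℕ) (hm : 1 ≤ m) :
    (-∫ t in (-1 : ℝ)..1,
          ((1 - t ^ 2) * deriv (deriv (PhiScaling lam m)) t
              - (2 * lam + 1) * t * deriv (PhiScaling lam m) t) *
            PhiScaling lam m t * (1 - t ^ 2) ^ (lam - 1 / 2)) /
        (∫ t in (-1 : ℝ)..1, (PhiScaling lam m t) ^ 2 * (1 - t ^ 2) ^ (lam - 1 / 2)) =
      (m : ℝ) * ((m : ℝ) + 2 * lam + 1) * (2 * lam + 1) / (2 * lam + 3) := by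
  have hN : (∫ t in (-1 : ℝ)..1,
          ((1 - t ^ 2) * deriv (deriv (PhiScaling lam m)) t
              - (2 * lam + 1) * t * deriv (PhiScaling lam m) t) *
            PhiScaling lam m t * (1 - t ^ 2) ^ (lam - 1 / 2)) =
      - JJ lam (PsiP lam m * PhiP lam m) := by
    have h1 : deriv (PhiScaling lam m) = fun t => (Polynomial.derivative (PhiP lam m)).eval t := by
      rw [PhiP_eval lam hlam]; funext t; exact Polynomial.deriv _
    have h2 : deriv (deriv (PhiScaling lam m)) =
        fun t => (Polynomial.derivative (Polynomial.derivative (PhiP lam m))).eval t := by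
      rw [h1]; funext t; exact Polynomial.deriv _
    unfold JJ
    rw [h2, h1, PhiP_eval lam hlam, ← intervalIntegral.integral_neg]
    congr 1
    funext t
    have h := congrArg (Polynomial.eval t) (PhiP_L lam m)
    simp only [Polynomial.eval_sub, Polynomial.eval_mul, Polynomial.eval_one, Polynomial.eval_pow,
      Polynomial.eval_X, Polynomial.eval_C, Polynomial.eval_neg] at h
    rw [h, Polynomial.eval_mul]
    ring
  have hD : (∫ t in (-1 : ℝ)..1, (PhiScaling lam m t) ^ 2 * (1 - t ^ 2) ^ (lam - 1 / 2)) =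
      JJ lam (PhiP lam m * PhiP lam m) := by
    unfold JJ
    rw [PhiP_eval lam hlam]
    simp only [Polynomial.eval_mul, pow_two]
  have hne : JJ lam (PhiP lam m * PhiP lam m) ≠ 0 := by
    rw [D_val lam hlam]
    have := hh_pos lam hlam m
    positivity
  rw [hN, hD, neg_neg, N_val lam hlam, mul_div_assoc, div_self hne, mul_one]
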